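/- arXiv:1910.08268 — 8 statements merged into one kernel-verified Lean document; each statement's English description precedes it below -/
import Mathlib

section
/- Let K, N be positive integers, let l ∈ {1,…,K−1}, and let t ∈ {0,1,…,max(⌈(K+1)/l⌉−2, 0)}. Set P = C(K−l,t), G = C(K,t), Q = G−P, and let m be a positive integer with 2^m ≥ 2G, and F = m·P. Then there exists a finite probability space carrying random variables W = (W_1,…,W_N) uniformly distributed on (Fin 2^F)^N (the files), cache variables Z_1,…,Z_K each taking values in a set of cardinality at most 2^{m·(N·C(K−1,t−1)+C(K−1,t))}, and for every demand vector D ∈ (Fin N)^K a broadcast variable X_D taking values in a set of cardinality at most 2^{m·C(K,t+1)}, such that: (i) correctness: for every D and every k ∈ {1,…,K} there is a function μ_{k,D} with W_{D(k)} = μ_{k,D}(Z_k, X_D) almost surely; (ii) cache secrecy: for every set L ⊆ {1,…,K} with |L| = l, the tuple (Z_k)_{k∈L} is independent of (W_1,…,W_N); (iii) delivery secrecy: for every D and every such L, the pair (X_D, (Z_k)_{k∈L}) is independent of the tuple (W_n)_{n ∉ {D(k) : k∈L}}. In particular the rate pair (M,R) with M = (N·C(K−1,t−1)+C(K−1,t))/C(K−l,t)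 and R = C(K,t+1)/C(K−l,t) is achievable. -/
open MeasureTheory ProbabilityTheory

namespace SecureCaching

section Uniform

variable {Ω B : Type*} [Fintype Ω] [AddCommGroup Ω] [Fintype B] [AddCommGroup B]

open Classical in
/-- If every value of the homomorphism `w` is attained at a period of the set `S`, then `w` is
equidistributed on `S`. -/
lemma card_inter_mul_card (w : Ω →+ B) (S : Set Ω)
    (h : ∀ b, ∃ v, w v = b ∧ ∀ ω, ω + v ∈ S ↔ ω ∈ S) (T : Set B) :
    Fintype.card ↥(S ∩ w ⁻¹' T) * Fintype.card B = Fintype.card S * Fintype.card T := by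
  have fiber (b : B) : (Finset.univ.filter fun ω => ω ∈ S ∧ w ω = b).card
      = (Finset.univ.filter fun ω => ω ∈ S ∧ w ω = 0).card := by
    obtain ⟨v, hv, hS⟩ := h b
    symm
    refine Finset.card_bij (fun ω _ => ω + v) ?_ ?_ ?_
    · intro ω hω
      simp only [Finset.mem_filter, Finset.mem_univ, true_and] at hω ⊢
      exact ⟨(hS ω).2 hω.1, by rw [map_add, hω.2, hv, zero_add]⟩
    · intro a _ b _ hab
      exact add_right_cancel hab
    · intro ω hω
      simp only [Finset.mem_filter, Finset.mem_univ, true_and] at hω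
      refine ⟨ω - v, ?_, sub_add_cancel _ _⟩
      simp only [Finset.mem_filter, Finset.mem_univ, true_and]
      exact ⟨(hS _).1 (by simpa using hω.1), by rw [map_sub, hω.2, hv, sub_self]⟩
  have count (T : Set B) : Fintype.card ↥(S ∩ w ⁻¹' T)
      = Fintype.card T * (Finset.univ.filter fun ω => ω ∈ S ∧ w ω = 0).card := by
    rw [← Set.toFinset_card, ← Set.toFinset_card,
      Finset.card_eq_sum_card_fiberwise (f := w) (t := T.toFinset)]
    · rw [← smul_eq_mul, ← Finset.sum_const]
      refine Finset.sum_congr rfl fun b hb => ?_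
      rw [← fiber b]
      congr 1
      ext ω
      simp only [Set.mem_toFinset] at hb
      simp only [Finset.mem_filter, Set.mem_toFinset, Set.mem_inter_iff, Set.mem_preimage,
        Finset.mem_univ, true_and]
      constructor
      · rintro ⟨⟨h₁, _⟩, h₂⟩
        exact ⟨h₁, h₂⟩
      · rintro ⟨h₁, h₂⟩
        exact ⟨⟨h₁, h₂ ▸ hb⟩, h₂⟩
    · intro ω hω
      simpa using (Set.mem_toFinset.1 hω).2
  have total := count Set.univ
  simp only [Set.preimage_univ, Set.inter_univ, Fintype.card_setUniv] at total
  rw [count T, total]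
  ring

variable [MeasurableSpace Ω] [DiscreteMeasurableSpace Ω]

/-- Under the uniform distribution, a function `f` is independent of (any function of) a
homomorphism `w` if every value of `w` is attained at a period of `f`. -/
lemma indepFun_uniform_of_periods {α β : Type*} [MeasurableSpace α] [MeasurableSpace β]
    (f : Ω → α) (w : Ω →+ B) (ψ : B → β)
    (h : ∀ b, ∃ v, w v = b ∧ ∀ ω, f (ω + v) = f ω) :
    IndepFun f (fun ω => ψ (w ω)) (PMF.uniformOfFintype Ω).toMeasure := by
  classical
  rw [indepFun_iff_measure_inter_preimage_eq_mul]
  intro S T _ _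
  have hS := card_inter_mul_card w (f ⁻¹' S)
    (fun b => (h b).imp fun v hv => ⟨hv.1, fun ω => by simp [hv.2]⟩) (ψ ⁻¹' T)
  have hU := card_inter_mul_card w Set.univ
    (fun b => (h b).imp fun v hv => ⟨hv.1, fun ω => by simp⟩) (ψ ⁻¹' T)
  change _ = (PMF.uniformOfFintype Ω).toMeasure _
    * (PMF.uniformOfFintype Ω).toMeasure (w ⁻¹' (ψ ⁻¹' T))
  change (PMF.uniformOfFintype Ω).toMeasure (f ⁻¹' S ∩ w ⁻¹' (ψ ⁻¹' T)) = _
  simp only [PMF.toMeasure_uniformOfFintype_apply _ (MeasurableSet.of_discrete)]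
  simp only [Set.univ_inter, Fintype.card_setUniv] at hU
  have hB : 0 < Fintype.card B := Fintype.card_pos
  have key : Fintype.card ↥(f ⁻¹' S ∩ w ⁻¹' (ψ ⁻¹' T)) * Fintype.card Ω
      = Fintype.card ↥(f ⁻¹' S) * Fintype.card ↥(w ⁻¹' (ψ ⁻¹' T)) := by
    apply Nat.eq_of_mul_eq_mul_right hB
    calc _ = Fintype.card ↥(f ⁻¹' S ∩ w ⁻¹' (ψ ⁻¹' T)) * Fintype.card B * Fintype.card Ω := by ring
      _ = Fintype.card ↥(f ⁻¹' S) * (Fintype.card Ω * Fintype.card ↥(ψ ⁻¹' T)) := by rw [hS]; ring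
      _ = _ := by rw [← hU]; ring
  have hΩ : (Fintype.card Ω : ENNReal) ≠ 0 := by exact_mod_cast Fintype.card_ne_zero
  have hΩ' : (Fintype.card Ω : ENNReal) ≠ ⊤ := ENNReal.natCast_ne_top _
  rw [ENNReal.div_eq_inv_mul, ENNReal.div_eq_inv_mul, ENNReal.div_eq_inv_mul,
    mul_mul_mul_comm, ← Nat.cast_mul, ← key, Nat.cast_mul, mul_assoc,
    mul_comm (Fintype.card ↥(f ⁻¹' S ∩ w ⁻¹' (ψ ⁻¹' T)) : ENNReal) (Fintype.card Ω),
    ← mul_assoc _ (Fintype.card Ω : ENNReal), ENNReal.inv_mul_cancel hΩ hΩ', one_mul]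

/-- A surjective homomorphism, followed by a bijection, maps the uniform distribution to the
uniform distribution. -/
lemma map_uniform_of_surjective {β : Type*} [MeasurableSpace β] [DiscreteMeasurableSpace β]
    [Fintype β] [Nonempty β] (w : Ω →+ B) (hw : Function.Surjective w) (ψ : B ≃ β) :
    Measure.map (fun ω => ψ (w ω)) (PMF.uniformOfFintype Ω).toMeasure
      = (PMF.uniformOfFintype β).toMeasure := by
  classical
  ext T hT
  rw [Measure.map_apply (measurable_of_finite _) hT]
  change (PMF.uniformOfFintype Ω).toMeasure (w ⁻¹' (ψ ⁻¹' T)) = _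
  have hU := card_inter_mul_card w Set.univ
    (fun b => (hw b).imp fun v hv => ⟨hv, fun ω => by simp⟩) (ψ ⁻¹' T)
  simp only [Set.univ_inter, Fintype.card_setUniv] at hU
  have hψ : Fintype.card ↥(ψ ⁻¹' T) = Fintype.card T :=
    Fintype.card_congr (ψ.subtypeEquiv fun _ => Iff.rfl)
  rw [Fintype.card_congr ψ, hψ] at hU
  simp only [PMF.toMeasure_uniformOfFintype_apply _ (MeasurableSet.of_discrete)]
  rw [ENNReal.div_eq_div_iff]
  · exact_mod_cast (mul_comm _ _).trans hU
  all_goals simp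

end Uniform

section Sharing

variable {𝔽 ι κ : Type*} [Field 𝔽] [Fintype ι] [DecidableEq ι]

/-- The secrets, i.e. the values at the nodes `e (inr i)` of the polynomial whose values at the
nodes `e (inl j)` are the given shares. -/
noncomputable def reconstruct (e : ι ⊕ κ → 𝔽) : (ι → 𝔽) →ₗ[𝔽] (κ → 𝔽) :=
  LinearMap.pi fun i =>
    Polynomial.leval (e (Sum.inr i)) ∘ₗ Lagrange.interpolate Finset.univ (e ∘ Sum.inl)

/-- Any secrets are compatible with vanishing shares on a set `A` that is not too large. -/
lemma exists_shares [Fintype κ] [DecidableEq κ] {e : ι ⊕ κ → 𝔽} (he : Function.Injective e)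
    (A : Finset ι) (hA : A.card + Fintype.card κ ≤ Fintype.card ι) (w : κ → 𝔽) :
    ∃ s : ι → 𝔽, reconstruct e s = w ∧ ∀ j ∈ A, s j = 0 := by
  set nodes : Finset (ι ⊕ κ) := A.disjSum Finset.univ
  set p := Lagrange.interpolate nodes e (Sum.elim 0 w) with hp
  have hdeg : p.degree < (Finset.univ : Finset ι).card := by
    refine (Lagrange.degree_interpolate_lt _ he.injOn).trans_le ?_
    rw [Finset.card_disjSum]
    exact_mod_cast hA
  have heval (x : ι ⊕ κ) (hx : x ∈ nodes) : p.eval (e x) = Sum.elim (0 : ι → 𝔽) w x :=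
    Lagrange.eval_interpolate_at_node _ he.injOn hx
  refine ⟨fun j => p.eval (e (Sum.inl j)), ?_, fun j hj => ?_⟩
  · have hinterp := Lagrange.eq_interpolate (v := e ∘ Sum.inl) (s := Finset.univ)
      (he.comp Sum.inl_injective).injOn hdeg
    ext i
    change Polynomial.eval _ (Lagrange.interpolate Finset.univ (e ∘ Sum.inl)
      fun j => p.eval ((e ∘ Sum.inl) j)) = _
    rw [← hinterp, heval _ (by simp [nodes])]
    rfl
  · exact heval _ (by simpa [nodes] using hj)

end Sharing

section Subsets

/-- The `t`-element sets of users. -/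
abbrev Users (K t : ℕ) : Type := {T : Finset (Fin K) // T.card = t}

lemma card_users (K t : ℕ) : Fintype.card (Users K t) = K.choose t := by
  simp

lemma card_users_containing_le (K t : ℕ) (k : Fin K) :
    Fintype.card {T : Users K t // k ∈ T.1} ≤ (K - 1).choose (t - 1) := by
  have hcard : Fintype.card ↥(((Finset.univ : Finset (Fin K)).erase k).powersetCard (t - 1))
      = (K - 1).choose (t - 1) := by
    rw [Fintype.card_coe, Finset.card_powersetCard, Finset.card_erase_of_mem (Finset.mem_univ k),
      Finset.card_univ, Fintype.card_fin]
  rw [← hcard]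
  refine Fintype.card_le_of_injective (fun T => ⟨T.1.1.erase k, ?_⟩) ?_
  · rw [Finset.mem_powersetCard, Finset.card_erase_of_mem T.2, T.1.2]
    exact ⟨Finset.erase_subset_erase _ (Finset.subset_univ _), rfl⟩
  · intro T T' h
    have h' : T.1.1.erase k = T'.1.1.erase k := congrArg Subtype.val h
    apply Subtype.ext
    apply Subtype.ext
    rw [← Finset.insert_erase T.2, h', Finset.insert_erase T'.2]

/-- The `t`-element sets of users meeting `L`. -/
def meeting {K : ℕ} (t : ℕ) (L : Finset (Fin K)) : Finset (Users K t) :=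
  Finset.univ.filter fun T => ¬ Disjoint T.1 L

lemma card_meeting_add {K : ℕ} (t : ℕ) (L : Finset (Fin K)) :
    (meeting t L).card + (K - L.card).choose t = Fintype.card (Users K t) := by
  have hdisj : (Finset.univ.filter fun T : Users K t => Disjoint T.1 L).card
      = (K - L.card).choose t := by
    have hL : (Lᶜ.powersetCard t).card = (K - L.card).choose t := by
      rw [Finset.card_powersetCard, Finset.card_compl, Fintype.card_fin]
    rw [← hL]
    refine Finset.card_bij (fun T _ => T.1) ?_ ?_ ?_
    · intro T hT
      rw [Finset.mem_powersetCard, Finset.subset_compl_iff_disjoint_right]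
      exact ⟨(Finset.mem_filter.1 hT).2, T.2⟩
    · intro T _ T' _ h
      exact Subtype.ext h
    · intro T hT
      rw [Finset.mem_powersetCard, Finset.subset_compl_iff_disjoint_right] at hT
      exact ⟨⟨T, hT.2⟩, by simpa using hT.1, rfl⟩
  rw [← hdisj, add_comm, meeting, Finset.card_filter_add_card_filter_not, Finset.card_univ]

/-- Remove a user from a set of `t + 1` users. -/
def Users.erase {K t : ℕ} (B : Users K (t + 1)) (k : B.1) : Users K t :=
  ⟨B.1.erase k, by rw [Finset.card_erase_of_mem k.2, B.2, Nat.add_sub_cancel]⟩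

end Subsets

section Scheme

variable (𝔽 : Type) [Field 𝔽] (K N t : ℕ)

/-- The sample space: the shares of every file, and a key for every set of `t + 1` users. -/
abbrev Sample : Type := (Fin N → Users K t → 𝔽) × (Users K (t + 1) → 𝔽)

/-- The cache of user `k`: the shares and the keys whose index contains `k`. -/
abbrev CacheContent (k : Fin K) : Type :=
  (Fin N × {T : Users K t // k ∈ T.1} → 𝔽) × ({B : Users K (t + 1) // k ∈ B.1} → 𝔽)

variable {𝔽 K N t}

/-- The cached content of user `k`. -/
def cache (k : Fin K) (ω : Sample 𝔽 K N t) : CacheContent 𝔽 K N t k :=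
  (fun x => ω.1 x.1 x.2.1, fun B => ω.2 B.1)

/-- The combination of requested shares that is sent to the users in `B`. -/
def payload (D : Fin K → Fin N) (s : Fin N → Users K t → 𝔽) (B : Users K (t + 1)) : 𝔽 :=
  ∑ k : B.1, s (D k) (B.erase k)

/-- The broadcast message: payloads masked by keys. -/
def broadcast (D : Fin K → Fin N) (ω : Sample 𝔽 K N t) : Users K (t + 1) → 𝔽 :=
  fun B => ω.2 B + payload D ω.1 B

lemma payload_add (D : Fin K → Fin N) (s s' : Fin N → Users K t → 𝔽) (B : Users K (t + 1)) :
    payload D (s + s') B = payload D s B + payload D s' B := by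
  simp [payload, Finset.sum_add_distrib]

/-- User `k` can compute all shares of the requested file. -/
lemma shares_eq_of_cache_eq (D : Fin K → Fin N) (k : Fin K) {ω ω' : Sample 𝔽 K N t}
    (hZ : cache k ω = cache k ω') (hX : broadcast D ω = broadcast D ω') :
    ω.1 (D k) = ω'.1 (D k) := by
  have hshare (n : Fin N) (T : Users K t) (hT : k ∈ T.1) : ω.1 n T = ω'.1 n T :=
    congrFun (congrArg Prod.fst hZ) (n, ⟨T, hT⟩)
  funext T
  by_cases hT : k ∈ T.1
  · exact hshare _ T hT
  let B : Users K (t + 1) := ⟨insert k T.1, by rw [Finset.card_insert_of_notMem hT, T.2]⟩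
  have hkB : k ∈ B.1 := Finset.mem_insert_self _ _
  have hkey : ω.2 B = ω'.2 B := congrFun (congrArg Prod.snd hZ) ⟨B, hkB⟩
  have hB : ω.2 B + payload D ω.1 B = ω'.2 B + payload D ω'.1 B := congrFun hX B
  rw [hkey, add_right_inj, payload, payload,
    ← Finset.add_sum_erase _ _ (Finset.mem_univ (⟨k, hkB⟩ : B.1)),
    ← Finset.add_sum_erase _ _ (Finset.mem_univ (⟨k, hkB⟩ : B.1))] at hB
  have hrest : ∑ j ∈ Finset.univ.erase (⟨k, hkB⟩ : B.1), ω.1 (D j) (B.erase j)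
      = ∑ j ∈ Finset.univ.erase (⟨k, hkB⟩ : B.1), ω'.1 (D j) (B.erase j) := by
    refine Finset.sum_congr rfl fun j hj => hshare _ _ ?_
    refine Finset.mem_erase.2 ⟨fun h => Finset.ne_of_mem_erase hj (Subtype.ext h.symm), hkB⟩
  rw [hrest, add_left_inj] at hB
  have hT' : B.erase ⟨k, hkB⟩ = T := Subtype.ext (Finset.erase_insert hT)
  simpa only [hT'] using hB

lemma cache_add_of_meeting_eq_zero {L : Finset (Fin K)} {v : Sample 𝔽 K N t}
    (hs : ∀ n, ∀ T ∈ meeting t L, v.1 n T = 0) (hq : ∀ B ∈ meeting (t + 1) L, v.2 B = 0)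
    {k : Fin K} (hk : k ∈ L) (ω : Sample 𝔽 K N t) : cache k (ω + v) = cache k ω := by
  have hmeet {r : ℕ} (T : Users K r) (hT : k ∈ T.1) : T ∈ meeting r L := by
    simpa [meeting] using Finset.not_disjoint_iff.2 ⟨k, hT, hk⟩
  refine Prod.ext (funext fun x => ?_) (funext fun B => ?_)
  · simp [cache, hs x.1 x.2.1 (hmeet _ x.2.2)]
  · simp [cache, hq B.1 (hmeet _ B.2)]

/-- If the shares known to `L` and all shares of the files requested by `L` vanish, then so do
the payloads `L` has a key for. -/
lemma payload_eq_zero {D : Fin K → Fin N} {L : Finset (Fin K)} {s : Fin N → Users K t → 𝔽}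
    (hs : ∀ n, ∀ T ∈ meeting t L, s n T = 0) (hD : ∀ k ∈ L, s (D k) = 0)
    {B : Users K (t + 1)} (hB : B ∈ meeting (t + 1) L) : payload D s B = 0 := by
  refine Finset.sum_eq_zero fun k _ => ?_
  by_cases hk : k.1 ∈ L
  · rw [hD _ hk, Pi.zero_apply]
  · refine hs _ _ ?_
    obtain ⟨j, hjB, hjL⟩ := Finset.not_disjoint_iff.1 (Finset.mem_filter.1 hB).2
    refine Finset.mem_filter.2 ⟨Finset.mem_univ _, Finset.not_disjoint_iff.2 ⟨j, ?_, hjL⟩⟩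
    exact Finset.mem_erase.2 ⟨fun h => hk (h ▸ hjL), hjB⟩

/-- The homomorphism sending the sample to the files with index in `ν`. -/
noncomputable def files {ν κ : Type*} (e : Users K t ⊕ κ → 𝔽) (i : ν → Fin N) :
    Sample 𝔽 K N t →+ (ν → κ → 𝔽) where
  toFun ω n := reconstruct e (ω.1 (i n))
  map_zero' := by ext; simp
  map_add' _ _ := by ext; simp

/-- There is a sample with prescribed files that is invisible in the caches of `L`. -/
lemma exists_files_eq_invisible_to_caches {κ : Type*} [Fintype κ] [DecidableEq κ]
    {e : Users K t ⊕ κ → 𝔽} (he : Function.Injective e) {L : Finset (Fin K)}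
    (hL : Fintype.card κ = (K - L.card).choose t) (w : Fin N → κ → 𝔽) :
    ∃ v : Sample 𝔽 K N t, files e id v = w ∧ ∀ k ∈ L, ∀ ω, cache k (ω + v) = cache k ω := by
  choose s hsw hs0 using fun n =>
    exists_shares he (meeting t L) (hL ▸ (card_meeting_add t L).le) (w n)
  exact ⟨(s, 0), funext hsw, fun k hk ω =>
    cache_add_of_meeting_eq_zero hs0 (fun _ _ => rfl) hk ω⟩

/-- There is a sample with prescribed files, except those requested by `L`, that is invisible in
the broadcast and the caches of `L`. -/
lemma exists_files_eq_invisible_to_broadcast {κ : Type*} [Fintype κ] [DecidableEq κ]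
    {e : Users K t ⊕ κ → 𝔽} (he : Function.Injective e) (D : Fin K → Fin N) {L : Finset (Fin K)}
    (hL : Fintype.card κ = (K - L.card).choose t) (w : {n // n ∉ L.image D} → κ → 𝔽) :
    ∃ v : Sample 𝔽 K N t, files e Subtype.val v = w ∧
      (∀ k ∈ L, ∀ ω, cache k (ω + v) = cache k ω) ∧
      ∀ ω, broadcast D (ω + v) = broadcast D ω := by
  classical
  choose s hsw hs0 using fun n =>
    exists_shares he (meeting t L) (hL ▸ (card_meeting_add t L).le) (w n)
  let s' : Fin N → Users K t → 𝔽 := fun n => if h : n ∉ L.image D then s ⟨n, h⟩ else 0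
  have hs' (n : Fin N) (T : Users K t) (hT : T ∈ meeting t L) : s' n T = 0 := by
    by_cases h : n ∉ L.image D
    · simpa only [s', dif_pos h] using hs0 ⟨n, h⟩ T hT
    · simp only [s', dif_neg h, Pi.zero_apply]
  have hD (k : Fin K) (hk : k ∈ L) : s' (D k) = 0 :=
    dif_neg (not_not.2 (Finset.mem_image_of_mem D hk))
  refine ⟨(s', fun B => -payload D s' B), funext fun n => ?_, fun k hk ω => ?_, fun ω => ?_⟩
  · change reconstruct e (s' n) = w n
    simp only [s', dif_pos n.2]
    exact hsw n
  · refine cache_add_of_meeting_eq_zero hs' (fun B hB => ?_) hk ω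
    simp only [payload_eq_zero hs' hD hB, neg_zero]
  · funext B
    simp only [broadcast, Prod.fst_add, Prod.snd_add, Pi.add_apply, payload_add]
    ring

end Scheme

lemma card_cacheContent_le {𝔽 : Type} [Fintype 𝔽] {K N t m : ℕ} (h𝔽 : Fintype.card 𝔽 = 2 ^ m) (k : Fin K) :
    Fintype.card (CacheContent 𝔽 K N t k)
      ≤ 2 ^ (m * (N * (K - 1).choose (t - 1) + (K - 1).choose t)) := by
  rw [Fintype.card_prod, Fintype.card_fun, Fintype.card_fun, Fintype.card_prod, Fintype.card_fin,
    h𝔽, ← pow_add, ← pow_mul]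
  gcongr
  · norm_num
  · exact card_users_containing_le K t k
  · exact card_users_containing_le K (t + 1) k

end SecureCaching

open SecureCaching

/-- **Theorem 1 (inner bound / achievability).**
For `K, N` positive, `l ∈ {1,…,K−1}`, `t ∈ {0,…,max(⌈(K+1)/l⌉−2,0)}`,
`P = C(K−l,t)`, `G = C(K,t)`, `Q = G − P`, `m` with `2^m ≥ 2G`, and `F = m·P`,
there is a finite probability space carrying files `W` uniform on `(Fin 2^F)^N`,
caches `Z k` with alphabet of size `2^{m(N·C(K−1,t−1)+C(K−1,t))}`, and broadcasts
`X D` with alphabet of size `2^{m·C(K,t+1)}`, satisfying correctness, cache secrecy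
and delivery secrecy against any `l` colluding users. -/
theorem secure_coded_caching_inner_bound
    (K N l t m : ℕ) (hK : 0 < K) (hN : 0 < N)
    (hl : 1 ≤ l) (hlK : l ≤ K - 1)
    (ht : (t : ℤ) ≤ max (⌈((K : ℚ) + 1) / (l : ℚ)⌉ - 2) 0)
    (hm : 0 < m) (hm2 : 2 * Nat.choose K t ≤ 2 ^ m) :
    ∃ (Ω : Type) (_ : Fintype Ω) (_ : MeasurableSpace Ω) (μ : Measure Ω)
      (_ : IsProbabilityMeasure μ)
      (W : Ω → (Fin N → Fin (2 ^ (m * Nat.choose (K - l) t))))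
      (Z : Fin K → Ω → Fin (2 ^ (m * (N * Nat.choose (K - 1) (t - 1) + Nat.choose (K - 1) t))))
      (X : (Fin K → Fin N) → Ω → Fin (2 ^ (m * Nat.choose K (t + 1)))),
      -- the files are uniformly distributed
      Measure.map W μ
        = (PMF.uniformOfFintype (Fin N → Fin (2 ^ (m * Nat.choose (K - l) t)))).toMeasure ∧
      -- (i) correctness: user `k` decodes his requested file from `(Z k, X D)`
      (∀ (D : Fin K → Fin N) (k : Fin K),
        ∃ μkD : Fin (2 ^ (m * (N * Nat.choose (K - 1) (t - 1) + Nat.choose (K - 1) t))) ×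
                  Fin (2 ^ (m * Nat.choose K (t + 1))) →
                Fin (2 ^ (m * Nat.choose (K - l) t)),
          (fun ω => W ω (D k)) =ᵐ[μ] fun ω => μkD (Z k ω, X D ω)) ∧
      -- (ii) cache secrecy against any `l` colluding users
      (∀ L : Finset (Fin K), L.card = l →
        IndepFun (fun ω (k : L) => Z k ω) W μ) ∧
      -- (iii) delivery secrecy against any `l` colluding users
      (∀ (D : Fin K → Fin N) (L : Finset (Fin K)), L.card = l →
        IndepFun (fun ω => (X D ω, fun k : L => Z k ω))
          (fun ω (n : {n : Fin N // n ∉ L.image D}) => W ω (n : Fin N)) μ) := by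
  classical
  have : Fact (Nat.Prime 2) := ⟨Nat.prime_two⟩
  let 𝔽 := GaloisField 2 m
  let _ : Fintype 𝔽 := Fintype.ofFinite 𝔽
  have h𝔽 : Fintype.card 𝔽 = 2 ^ m := by
    rw [← Nat.card_eq_fintype_card]
    exact GaloisField.card 2 m hm.ne'
  let κ := Fin ((K - l).choose t)
  obtain ⟨e⟩ : Nonempty (Users K t ⊕ κ ↪ 𝔽) := by
    refine Function.Embedding.nonempty_of_card_le ?_
    rw [Fintype.card_sum, card_users, Fintype.card_fin, h𝔽]
    have := Nat.choose_le_choose t (Nat.sub_le K l)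
    omega
  have eF : (κ → 𝔽) ≃ Fin (2 ^ (m * (K - l).choose t)) :=
    Fintype.equivFinOfCardEq (by rw [Fintype.card_fun, h𝔽, Fintype.card_fin, pow_mul])
  have eX : (Users K (t + 1) → 𝔽) ≃ Fin (2 ^ (m * K.choose (t + 1))) :=
    Fintype.equivFinOfCardEq (by rw [Fintype.card_fun, h𝔽, card_users, pow_mul])
  have eZ (k : Fin K) : CacheContent 𝔽 K N t k ↪
      Fin (2 ^ (m * (N * (K - 1).choose (t - 1) + (K - 1).choose t))) :=
    Classical.choice (Function.Embedding.nonempty_of_card_le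
      ((card_cacheContent_le h𝔽 k).trans_eq (Fintype.card_fin _).symm))
  let _ : MeasurableSpace (Sample 𝔽 K N t) := ⊤
  have : DiscreteMeasurableSpace (Sample 𝔽 K N t) := ⟨fun _ => trivial⟩
  have hκ (L : Finset (Fin K)) (hL : L.card = l) : Fintype.card κ = (K - L.card).choose t := by
    rw [Fintype.card_fin, hL]
  refine ⟨Sample 𝔽 K N t, inferInstance, inferInstance,
    (PMF.uniformOfFintype (Sample 𝔽 K N t)).toMeasure, inferInstance,
    fun ω n => eF (files e id ω n), fun k ω => eZ k (cache k ω), fun D ω => eX (broadcast D ω),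
    ?_, fun D k => ?_, fun L hL => ?_, fun D L hL => ?_⟩
  · obtain ⟨L, _, hL⟩ := Finset.exists_subset_card_eq
      (s := (Finset.univ : Finset (Fin K))) (n := l) (by simp; omega)
    exact map_uniform_of_surjective (files e id)
      (fun w => (exists_files_eq_invisible_to_caches e.injective (hκ L hL) w).imp fun _ h => h.1)
      (Equiv.piCongrRight fun _ => eF)
  · have : Nonempty (Fin (2 ^ (m * (K - l).choose t))) := ⟨eF 0⟩
    have hfactor : Function.FactorsThrough
        (fun ω : Sample 𝔽 K N t => eF (files e id ω (D k)))
        (fun ω => (eZ k (cache k ω), eX (broadcast D ω))) := by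
      intro ω ω' h
      have hs := shares_eq_of_cache_eq D k ((eZ k).injective (congrArg Prod.fst h))
        (eX.injective (congrArg Prod.snd h))
      exact congrArg (fun s => eF (reconstruct e s)) hs
    obtain ⟨dec, hdec⟩ := (Function.factorsThrough_iff _).1 hfactor
    exact ⟨dec, Filter.Eventually.of_forall fun ω => congrFun hdec ω⟩
  · refine indepFun_uniform_of_periods _ (files e id) (fun w n => eF (w n)) fun w => ?_
    obtain ⟨v, hv, hcache⟩ := exists_files_eq_invisible_to_caches e.injective (hκ L hL) w
    exact ⟨v, hv, fun ω => funext fun k => congrArg (eZ k) (hcache k k.2 ω)⟩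
  · refine indepFun_uniform_of_periods _ (files e Subtype.val) (fun w n => eF (w n)) fun w => ?_
    obtain ⟨v, hv, hcache, hX⟩ :=
      exists_files_eq_invisible_to_broadcast e.injective D (hκ L hL) w
    exact ⟨v, hv, fun ω => Prod.ext (congrArg eX (hX ω))
      (funext fun k => congrArg (eZ k) (hcache k k.2 ω))⟩
end

section
/- Let N, K, F be positive integers, l ∈ {1,…,K−1}, and M, R ≥ 0 real. Suppose on a probability space there are random variables W = (W_1,…,W_N) uniformly distributed on (Fin 2^F)^N, caches Z_1,…,Z_K each valued in Fin 2^{⌊MF⌋}, and for every demand vector D ∈ (Fin N)^K a broadcast X_D valued in Fin 2^{⌊RF⌋}, such that: (i) for every D and k there is a function μ_{k,D} with W_{D(k)} = μ_{k,D}(Z_k, X_D) almost surely; and (ii) for every D and every L ⊆ {1,…,K} with |L| = l, the pair (X_D, (Z_k)_{k∈L}) is independent of the tuple (W_n)_{n ∉ {D(k):k∈L}}. Then for every integer s with l ≤ s ≤ min(⌊N/2⌋, K), we have (⌊N/s⌋ − 1)·⌊RF⌋ + (s − l)·⌊MF⌋ ≥ (s·⌊N/s⌋ − l)·F; in particular (⌊N/s⌋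 − 1)·R + (s − l)·M ≥ s·⌊N/s⌋ − l. -/
open MeasureTheory ProbabilityTheory

/-- A map into a finite type has a fibre of positive outer measure. No measurability is needed. -/
lemma exists_measure_fiber_ne_zero {Ω α : Type*} [MeasurableSpace Ω] (μ : Measure Ω) [NeZero μ]
    [Finite α] (f : Ω → α) : ∃ a, μ (f ⁻¹' {a}) ≠ 0 := by
  by_contra! h
  have hU : μ (⋃ a, f ⁻¹' {a}) = 0 := measure_iUnion_null h
  rw [← Set.preimage_iUnion, Set.iUnion_of_singleton, Set.preimage_univ] at hU
  exact NeZero.ne μ (Measure.measure_univ_eq_zero.1 hU)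

/-- Every fibre of a uniformly distributed map has positive measure. -/
lemma measure_fiber_ne_zero_of_map_eq_uniform {Ω α : Type*} [MeasurableSpace Ω] (μ : Measure Ω)
    [Fintype α] [Nonempty α] [MeasurableSpace α] [MeasurableSingletonClass α] (f : Ω → α)
    (hf : Measure.map f μ = (PMF.uniformOfFintype α).toMeasure) (a : α) :
    μ (f ⁻¹' {a}) ≠ 0 := by
  have : NeZero (Measure.map f μ) := by rw [hf]; infer_instance
  rw [← Measure.map_apply_of_aemeasurable (aemeasurable_of_map_neZero this)
    (measurableSet_singleton a), hf,
    PMF.toMeasure_apply_singleton _ _ (measurableSet_singleton a)]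
  simp

/-- If `f` is independent of `g`, with values in finite types, and every value of `g` has positive
measure, then some value of `f` is compatible with all values of `g`, even within a given almost
sure event. -/
lemma ProbabilityTheory.IndepFun.exists_forall_exists_eq {Ω α β : Type*} [MeasurableSpace Ω]
    {μ : Measure Ω} [NeZero μ] [Finite α] [MeasurableSpace α] [MeasurableSingletonClass α]
    [MeasurableSpace β] [MeasurableSingletonClass β] {f : Ω → α} {g : Ω → β}
    (hfg : IndepFun f g μ) (hg : ∀ b, μ (g ⁻¹' {b}) ≠ 0) {p : Ω → Prop} (hp : ∀ᵐ ω ∂μ, p ω) :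
    ∃ a, ∀ b, ∃ ω, p ω ∧ f ω = a ∧ g ω = b := by
  obtain ⟨a, ha⟩ := exists_measure_fiber_ne_zero μ f
  refine ⟨a, fun b => ?_⟩
  have hne : μ (f ⁻¹' {a} ∩ g ⁻¹' {b}) ≠ 0 := by
    rw [hfg.measure_inter_preimage_eq_mul _ _ (measurableSet_singleton a)
      (measurableSet_singleton b)]
    exact mul_ne_zero ha (hg b)
  by_contra! h
  refine hne (measure_mono_null ?_ (ae_iff.1 hp))
  rintro ω ⟨hfa, hgb⟩ hpω
  exact h ω hpω hfa hgb

/-- **Theorem 2, first case (outer bound).**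
For a secure coded caching scheme with `N` files of `F` bits, `K` users with caches in
`Fin 2^{⌊MF⌋}`, broadcasts in `Fin 2^{⌊RF⌋}`, correctness and delivery secrecy against any
`l` colluding users, every integer `s` with `l ≤ s ≤ min(⌊N/2⌋, K)` satisfies
`(⌊N/s⌋−1)⌊RF⌋ + (s−l)⌊MF⌋ ≥ (s⌊N/s⌋−l)F`, and in particular
`(⌊N/s⌋−1)R + (s−l)M ≥ s⌊N/s⌋ − l`. -/
theorem secure_coded_caching_outer_bound
    (N K F l : ℕ) (hN : 0 < N) (hK : 0 < K) (hF : 0 < F)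
    (hl : 1 ≤ l) (hlK : l ≤ K - 1) (M R : ℝ) (hM : 0 ≤ M) (hR : 0 ≤ R)
    {Ω : Type*} [MeasurableSpace Ω] (μ : Measure Ω) [IsProbabilityMeasure μ]
    (W : Ω → (Fin N → Fin (2 ^ F)))
    (Z : Fin K → Ω → Fin (2 ^ ⌊M * F⌋₊))
    (X : (Fin K → Fin N) → Ω → Fin (2 ^ ⌊R * F⌋₊))
    (hW : Measure.map W μ = (PMF.uniformOfFintype (Fin N → Fin (2 ^ F))).toMeasure)
    -- (i) correctness
    (hdec : ∀ (D : Fin K → Fin N) (k : Fin K),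
      ∃ μkD : Fin (2 ^ ⌊M * F⌋₊) × Fin (2 ^ ⌊R * F⌋₊) → Fin (2 ^ F),
        (fun ω => W ω (D k)) =ᵐ[μ] fun ω => μkD (Z k ω, X D ω))
    -- (ii) delivery secrecy against any `l` colluding users
    (hsec : ∀ (D : Fin K → Fin N) (L : Finset (Fin K)), L.card = l →
      IndepFun (fun ω => (X D ω, fun k : L => Z k ω))
        (fun ω (n : {n : Fin N // n ∉ L.image D}) => W ω (n : Fin N)) μ) :
    ∀ s : ℕ, l ≤ s → s ≤ min (N / 2) K →
      (N / s - 1) * ⌊R * F⌋₊ + (s - l) * ⌊M * F⌋₊ ≥ (s * (N / s) - l) * F ∧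
      ((N / s : ℕ) - 1 : ℝ) * R + ((s : ℝ) - l) * M ≥ (s : ℝ) * (N / s : ℕ) - l := by
  intro s hls hsNK
  have hs : 0 < s := by omega
  have hsN : s ≤ N / 2 := hsNK.trans (min_le_left _ _)
  have hsK : s ≤ K := hsNK.trans (min_le_right _ _)
  have hq : 2 ≤ N / s := (Nat.le_div_iff_mul_le hs).2 (by omega)
  have hqN : s * (N / s) ≤ N := Nat.mul_div_le N s
  generalize N / s = q at hq hqN ⊢
  have hlsq : l ≤ s * q := hls.trans (Nat.le_mul_of_pos_right s (by omega))
  have key : (q - 1) * ⌊R * F⌋₊ + (s - l) * ⌊M * F⌋₊ ≥ (s * q - l) * F := by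
    generalize ⌊R * F⌋₊ = r at *
    generalize ⌊M * F⌋₊ = m at *
    -- In round `j`, user `k < s` requests file `j * s + k`.
    let D : Fin q → Fin K → Fin N := fun j k => ⟨j * s + k % s, by
      have h1 := Nat.mod_lt (k : ℕ) hs
      have h2 : (j + 1) * s ≤ q * s := Nat.mul_le_mul_right s j.2
      have h3 : q * s = s * q := Nat.mul_comm q s
      have h4 : (j + 1 : ℕ) * s = j * s + s := Nat.succ_mul _ _
      omega⟩
    let j₀ : Fin q := ⟨0, by omega⟩
    let L : Finset (Fin K) := Finset.univ.map (Fin.castLEEmb (by omega : l ≤ K))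
    have hLmem : ∀ k : Fin K, (k : ℕ) < l → k ∈ L := fun k hk =>
      Finset.mem_map.2 ⟨⟨k, hk⟩, Finset.mem_univ _, Fin.ext rfl⟩
    have hLimage : ∀ n : Fin N, l ≤ n → n ∉ L.image (D j₀) := by
      intro n hn hmem
      obtain ⟨k, hk, rfl⟩ := Finset.mem_image.1 hmem
      obtain ⟨i, -, rfl⟩ := Finset.mem_map.1 hk
      have hi : (i : ℕ) % s = i := Nat.mod_eq_of_lt (by omega)
      have : l ≤ 0 * s + (i : ℕ) % s := hn
      omega
    choose dec hdec' using fun j k => hdec (D j) k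
    have hgood : ∀ᵐ ω ∂μ, ∀ j k, W ω (D j k) = dec j k (Z k ω, X (D j) ω) :=
      ae_all_iff.2 fun j => ae_all_iff.2 fun k => hdec' j k
    obtain ⟨⟨x, z⟩, hxz⟩ := (hsec (D j₀) L (by simp [L])).exists_forall_exists_eq
      (fun b => by
        let w : Fin N → Fin (2 ^ F) := fun n => if h : n ∉ L.image (D j₀) then b ⟨n, h⟩ else 0
        refine fun h0 => measure_fiber_ne_zero_of_map_eq_uniform μ W hW w
          (measure_mono_null (fun ω hω => ?_) h0)
        have hω' : W ω = w := hω
        refine Set.mem_singleton_iff.2 (funext fun n => ?_)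
        refine (congrFun hω' n).trans ?_
        exact dif_pos n.2) hgood
    have hfiles : ∀ a : Fin (s * q - l) → Fin (2 ^ F), ∃ ω,
        (∀ j k, W ω (D j k) = dec j k (Z k ω, X (D j) ω)) ∧ X (D j₀) ω = x ∧
        (∀ k : L, Z k ω = z k) ∧
        ∀ t : Fin (s * q - l), W ω ⟨l + t, by omega⟩ = a t := by
      intro a
      obtain ⟨ω, hω, hx, hw⟩ := hxz fun n =>
        if h : (n : ℕ) - l < s * q - l then a ⟨n - l, h⟩ else 0
      refine ⟨ω, hω, congrArg Prod.fst hx, fun k => congrFun (congrArg Prod.snd hx) k, fun t => ?_⟩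
      have := congrFun hw ⟨⟨l + t, by omega⟩, hLimage _ (Nat.le_add_right l t)⟩
      simpa using this
    choose ω hω hx hz hw using hfiles
    let Φ : (Fin (s * q - l) → Fin (2 ^ F)) →
        (Fin (q - 1) → Fin (2 ^ r)) × (Fin (s - l) → Fin (2 ^ m)) := fun a =>
      (fun j => X (D ⟨j + 1, by omega⟩) (ω a), fun k => Z ⟨l + k, by omega⟩ (ω a))
    have hΦ : Function.Injective Φ := by
      intro a b hab
      have hX : ∀ j, X (D j) (ω a) = X (D j) (ω b) := by
        rintro ⟨_ | j, hj⟩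
        · exact (hx a).trans (hx b).symm
        · exact congrFun (congrArg Prod.fst hab) ⟨j, by omega⟩
      have hZ : ∀ k : Fin K, (k : ℕ) < s → Z k (ω a) = Z k (ω b) := by
        intro k hks
        by_cases hkl : (k : ℕ) < l
        · exact (hz a ⟨k, hLmem k hkl⟩).trans (hz b ⟨k, hLmem k hkl⟩).symm
        · have h := congrFun (congrArg Prod.snd hab) ⟨k - l, by omega⟩
          have hk : (⟨l + (k - l), by omega⟩ : Fin K) = k := Fin.ext (by simp; omega)
          simpa only [Φ, hk] using h
      funext t
      have hmod := Nat.mod_lt (l + t) hs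
      let j : Fin q := ⟨(l + t) / s, Nat.div_lt_of_lt_mul (by omega)⟩
      let k : Fin K := ⟨(l + t) % s, by omega⟩
      have hDjk : D j k = ⟨l + t, by omega⟩ := Fin.ext (by
        simp only [D, j, k, Nat.mod_mod]
        exact Nat.div_add_mod' _ _)
      rw [← hw a t, ← hw b t, ← hDjk, hω, hω, hX, hZ k hmod]
    have hcard := Fintype.card_le_of_injective Φ hΦ
    simp only [Fintype.card_prod, Fintype.card_fun, Fintype.card_fin, ← pow_mul, ← pow_add] at hcard
    have := (Nat.pow_le_pow_iff_right (by norm_num : 1 < 2)).1 hcard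
    linarith [Nat.mul_comm F (s * q - l), Nat.mul_comm r (q - 1), Nat.mul_comm m (s - l)]
  refine ⟨key, ?_⟩
  have hF' : (0 : ℝ) < F := Nat.cast_pos.2 hF
  have keyR : ((s : ℝ) * q - l) * F ≤ ((q : ℝ) - 1) * ⌊R * F⌋₊ + ((s : ℝ) - l) * ⌊M * F⌋₊ := by
    have h : (((s * q - l) * F : ℕ) : ℝ) ≤ ((q - 1) * ⌊R * F⌋₊ + (s - l) * ⌊M * F⌋₊ : ℕ) :=
      Nat.cast_le.2 key
    push_cast [Nat.cast_sub hlsq, Nat.cast_sub hls, Nat.cast_sub (by omega : 1 ≤ q)] at h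
    exact h
  have hq1 : (0 : ℝ) ≤ (q : ℝ) - 1 := sub_nonneg.2 (by exact_mod_cast (by omega : 1 ≤ q))
  have hsl : (0 : ℝ) ≤ (s : ℝ) - l := sub_nonneg.2 (Nat.cast_le.2 hls)
  have hr := mul_le_mul_of_nonneg_left (Nat.floor_le (mul_nonneg hR hF'.le)) hq1
  have hm := mul_le_mul_of_nonneg_left (Nat.floor_le (mul_nonneg hM hF'.le)) hsl
  refine le_of_mul_le_mul_right ?_ hF'
  linarith
end

section
/- Let 𝔽 be a field, m a positive integer, and x, y : Fin m → 𝔽 injective functions such that x i + y j ≠ 0 for all i, j. Then the m × m matrix with (i,j) entry (x i + y j)⁻¹ has nonzero determinant; consequently every square submatrix of a Cauchy matrix (obtained by selecting any set of distinct rows and any equally sized set of distinct columns) is invertible. -/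
open Polynomial in
/-- A Cauchy matrix over a field, indexed by an arbitrary finite type, has nonzero determinant. -/
theorem Matrix.det_cauchy_ne_zero {ι K : Type*} [Fintype ι] [DecidableEq ι] [Field K]
    {x y : ι → K} (hx : Function.Injective x) (hy : Function.Injective y)
    (hxy : ∀ i j, x i + y j ≠ 0) :
    (Matrix.of fun i j => (x i + y j)⁻¹).det ≠ 0 := by
  intro hdet
  obtain ⟨v, hv, hMv⟩ := Matrix.exists_mulVec_eq_zero_iff.mpr hdet
  refine hv (funext fun j => ?_)
  let P : K[X] := ∑ j, C (v j) * ∏ k ∈ Finset.univ.erase j, (X + C (y k))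
  have hP_eval (t : K) : P.eval t = ∑ j, v j * ∏ k ∈ Finset.univ.erase j, (t + y k) := by
    simp [P, eval_finsetSum, eval_prod]
  have hP_degree : P.degree < (Finset.univ : Finset ι).card := by
    refine (degree_sum_le _ _).trans_lt
      ((Finset.sup_lt_iff (WithBot.bot_lt_coe _)).mpr fun j _ => ?_)
    have hprod : (∏ k ∈ Finset.univ.erase j, (X + C (y k))).degree
        = ((Finset.univ.erase j).card : WithBot ℕ) := by
      simp [degree_prod]
    refine ((degree_mul_le _ _).trans (add_le_add_left degree_C_le _)).trans_lt ?_
    rw [hprod, zero_add]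
    exact_mod_cast Finset.card_erase_lt_of_mem (Finset.mem_univ j)
  have hP_root (i : ι) : P.eval (x i) = 0 := by
    have hi : ∑ j, (x i + y j)⁻¹ * v j = 0 := congrFun hMv i
    rw [hP_eval]
    calc ∑ j, v j * ∏ k ∈ Finset.univ.erase j, (x i + y k)
        = (∏ k, (x i + y k)) * ∑ j, (x i + y j)⁻¹ * v j := by
          rw [Finset.mul_sum]
          refine Finset.sum_congr rfl fun j _ => ?_
          rw [← Finset.mul_prod_erase _ _ (Finset.mem_univ j)]
          field_simp [hxy i j]
      _ = 0 := by rw [hi, mul_zero]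
  have hP : P = 0 :=
    eq_zero_of_degree_lt_of_eval_index_eq_zero _ hx.injOn hP_degree fun i _ => hP_root i
  have hj : v j * ∏ k ∈ Finset.univ.erase j, (-y j + y k) = 0 := by
    have h := hP_eval (-y j)
    rw [hP, eval_zero, Finset.sum_eq_single j] at h
    · exact h.symm
    · intro l _ hl
      rw [Finset.prod_eq_zero (Finset.mem_erase.mpr ⟨hl.symm, Finset.mem_univ j⟩)
        (neg_add_cancel _), mul_zero]
    · simp
  refine (mul_eq_zero.mp hj).resolve_right (Finset.prod_ne_zero_iff.mpr fun k hk h => ?_)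
  exact Finset.ne_of_mem_erase hk (hy (neg_add_eq_zero.mp h).symm)

/-- **Cauchy matrices have nonzero determinant, hence every square submatrix of a
Cauchy matrix is invertible.** -/
theorem cauchy_matrix_det_ne_zero_and_submatrix_isUnit
    {𝔽 : Type*} [Field 𝔽] (m : ℕ) (hm : 0 < m)
    (x y : Fin m → 𝔽) (hx : Function.Injective x) (hy : Function.Injective y)
    (hxy : ∀ i j, x i + y j ≠ 0) :
    (Matrix.of fun i j : Fin m => (x i + y j)⁻¹).det ≠ 0 ∧
    ∀ (G : ℕ) (x' y' : Fin G → 𝔽), Function.Injective x' → Function.Injective y' →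
      (∀ i j, x' i + y' j ≠ 0) →
      ∀ (r c : Fin m → Fin G), Function.Injective r → Function.Injective c →
        IsUnit ((Matrix.of fun i j : Fin G => (x' i + y' j)⁻¹).submatrix r c) := by
  refine ⟨Matrix.det_cauchy_ne_zero hx hy hxy, fun G x' y' hx' hy' hxy' r c hr hc => ?_⟩
  rw [Matrix.isUnit_iff_isUnit_det, isUnit_iff_ne_zero]
  exact Matrix.det_cauchy_ne_zero (hx'.comp hr) (hy'.comp hc) fun i j => hxy' (r i) (c j)
end

section
/- Let 𝔽 be a finite field, P, Q positive integers, G = P + Q, and let C be a G × G matrix over 𝔽 every square submatrix of which is invertible (for instance a Cauchy matrix). On a probability space let W : Ω → 𝔽^P be any random variable and Y : Ω → 𝔽^Q be uniformly distributed and independent of W, and define the shares S_i = Σ_{p<P} C_{i,p}·W_p + Σ_{q<Q} C_{i,P+q}·Y_q for i ∈ Fin G. Then for every subset I ⊆ Fin G with |I| ≤ Q, the tuple (S_i)_{i∈I} is uniformly distributed on 𝔽^I and is independent of W. -/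
open MeasureTheory ProbabilityTheory
open scoped Matrix

/-- A surjective homomorphism of finite groups sends the uniform law to the uniform law. -/
theorem PMF.map_uniformOfFintype_of_surjective {A B : Type*} [AddGroup A] [AddGroup B]
    [Fintype A] [Fintype B] (f : A →+ B) (hf : Function.Surjective f) :
    (PMF.uniformOfFintype A).map f = PMF.uniformOfFintype B := by
  classical
  ext b
  have hfiber (b' : B) : (Finset.univ.filter fun a => f a = b').card =
      (Finset.univ.filter fun a => f a = b).card :=
    AddMonoidHom.card_fiber_eq_of_mem_range f (hf b') (hf b)
  have hcard : Fintype.card A =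
      Fintype.card B * (Finset.univ.filter fun a => f a = b).card := by
    rw [← Finset.card_univ, Finset.card_eq_sum_card_fiberwise (f := f) (t := Finset.univ)
      (fun _ _ => Finset.mem_coe.2 (Finset.mem_univ _))]
    simp [hfiber]
  have hpos : (Finset.univ.filter fun a => f a = b).card ≠ 0 := by
    intro h
    rw [h, mul_zero] at hcard
    exact Fintype.card_ne_zero hcard
  rw [PMF.map_apply, tsum_fintype]
  simp only [PMF.uniformOfFintype_apply, eq_comm (a := b)]
  rw [← Finset.sum_filter, Finset.sum_const, nsmul_eq_mul, hcard, Nat.cast_mul,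
    ENNReal.mul_inv (Or.inr (ENNReal.natCast_ne_top _)) (Or.inl (ENNReal.natCast_ne_top _)),
    mul_left_comm, ENNReal.mul_inv_cancel (by exact_mod_cast hpos) (ENNReal.natCast_ne_top _),
    mul_one]

/-- One-time pad: adding an independent uniform variable `U` to any function of `X` gives a
uniform variable independent of `X`. -/
theorem map_eq_uniform_and_indepFun_of_add {Ω α B : Type*} [MeasurableSpace Ω] {μ : Measure Ω}
    [IsProbabilityMeasure μ] [Countable α] [MeasurableSpace α] [MeasurableSingletonClass α]
    [AddCommGroup B] [Fintype B] [MeasurableSpace B] [MeasurableSingletonClass B]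
    {X : Ω → α} {U : Ω → B} (hX : Measurable X) (hU : Measurable U)
    (hUunif : μ.map U = (PMF.uniformOfFintype B).toMeasure) (hXU : IndepFun X U μ) (g : α → B) :
    μ.map (fun ω => g (X ω) + U ω) = (PMF.uniformOfFintype B).toMeasure ∧
      IndepFun (fun ω => g (X ω) + U ω) X μ := by
  have hT : Measurable fun ω => g (X ω) + U ω :=
    (measurable_from_prod_countable_left (f := fun p : α × B => g p.1 + p.2)
      fun _ => measurable_of_countable _).comp (hX.prodMk hU)
  have hjoint : μ.map (fun ω => (g (X ω) + U ω, X ω)) =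
      (PMF.uniformOfFintype B).toMeasure.prod (μ.map X) := by
    refine Measure.ext_of_singleton fun ⟨t, x⟩ => ?_
    have hpre : (fun ω => (g (X ω) + U ω, X ω)) ⁻¹' {(t, x)} =
        X ⁻¹' {x} ∩ U ⁻¹' {t - g x} := by
      ext ω
      simp only [Set.mem_preimage, Set.mem_singleton_iff, Prod.mk.injEq, Set.mem_inter_iff,
        eq_sub_iff_add_eq']
      constructor
      · rintro ⟨h, rfl⟩
        exact ⟨rfl, h⟩
      · rintro ⟨rfl, h⟩
        exact ⟨h, rfl⟩
    rw [Measure.map_apply (hT.prodMk hX) (measurableSet_singleton _), hpre,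
      hXU.measure_inter_preimage_eq_mul _ _ (measurableSet_singleton _)
        (measurableSet_singleton _),
      ← Measure.map_apply hU (measurableSet_singleton _), hUunif,
      ← Measure.map_apply hX (measurableSet_singleton _),
      ← Set.singleton_prod_singleton, Measure.prod_prod,
      PMF.toMeasure_apply_singleton _ _ (measurableSet_singleton _),
      PMF.toMeasure_apply_singleton _ _ (measurableSet_singleton _), mul_comm]
    simp only [PMF.uniformOfFintype_apply]
  have := Measure.isProbabilityMeasure_map (μ := μ) hX.aemeasurable
  have hunif : μ.map (fun ω => g (X ω) + U ω) = (PMF.uniformOfFintype B).toMeasure := by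
    have h := congrArg Measure.fst hjoint
    rwa [Measure.fst_map_prodMk hX, Measure.fst_prod] at h
  refine ⟨hunif, ?_⟩
  rw [indepFun_iff_map_prod_eq_prod_map_map hT.aemeasurable hX.aemeasurable, hunif, hjoint]

/-- A matrix with an invertible submatrix meeting every row acts surjectively. -/
theorem Matrix.mulVec_surjective_of_isUnit_det_submatrix {ι κ m R : Type*} [CommRing R]
    [Fintype κ] [DecidableEq κ] [Fintype m] [DecidableEq m]
    (N : Matrix ι κ R) (e : m ≃ ι) (c : m → κ) (h : IsUnit (N.submatrix e c).det) :
    Function.Surjective N.mulVec := by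
  intro b
  refine ⟨(1 : Matrix κ κ R).submatrix id c *ᵥ ((N.submatrix e c)⁻¹ *ᵥ (b ∘ e)), ?_⟩
  have hN : (N * (1 : Matrix κ κ R).submatrix id c).submatrix e id = N.submatrix e c := by
    ext i j
    simp [Matrix.mul_apply, Matrix.one_apply]
  ext i
  obtain ⟨j, rfl⟩ := e.surjective i
  rw [Matrix.mulVec_mulVec]
  change ((N * (1 : Matrix κ κ R).submatrix id c).submatrix e id *ᵥ _) j = _
  rw [hN, Matrix.mulVec_mulVec, Matrix.mul_nonsing_inv _ h, Matrix.one_mulVec, Function.comp_apply]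

/-- **Secrecy of the `(G,P,Q)` secret sharing scheme.** If every square submatrix of the
encoding matrix `C` is invertible and the `Q` key symbols are uniform and independent of
the message `W`, then any collection of at most `Q` shares is uniformly distributed and
independent of the message. -/
theorem secret_sharing_secrecy
    {𝔽 : Type*} [Field 𝔽] [Fintype 𝔽] [MeasurableSpace 𝔽] [MeasurableSingletonClass 𝔽]
    (P Q : ℕ) (hP : 0 < P) (hQ : 0 < Q)
    (C : Matrix (Fin (P + Q)) (Fin (P + Q)) 𝔽)
    (hC : ∀ (m : ℕ) (r c : Fin m → Fin (P + Q)), Function.Injective r →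
      Function.Injective c → IsUnit (C.submatrix r c).det)
    {Ω : Type*} [MeasurableSpace Ω] (μ : Measure Ω) [IsProbabilityMeasure μ]
    (W : Ω → (Fin P → 𝔽)) (Y : Ω → (Fin Q → 𝔽))
    (hWmeas : Measurable W) (hYmeas : Measurable Y)
    (hYunif : Measure.map Y μ = (PMF.uniformOfFintype (Fin Q → 𝔽)).toMeasure)
    (hindep : IndepFun W Y μ)
    (S : Fin (P + Q) → Ω → 𝔽)
    (hS : ∀ i ω, S i ω =
      (∑ p : Fin P, C i (Fin.castAdd Q p) * W ω p) +
      (∑ q : Fin Q, C i (Fin.natAdd P q) * Y ω q)) :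
    ∀ I : Finset (Fin (P + Q)), I.card ≤ Q →
      Measure.map (fun ω (i : I) => S i ω) μ
        = (PMF.uniformOfFintype (↥I → 𝔽)).toMeasure ∧
      IndepFun (fun ω (i : I) => S i ω) W μ := by
  intro I hI
  let N : Matrix I (Fin Q) 𝔽 := C.submatrix Subtype.val (Fin.natAdd P)
  have hN : Function.Surjective N.mulVec :=
    N.mulVec_surjective_of_isUnit_det_submatrix I.equivFin.symm (Fin.castLE hI)
      (hC _ (Subtype.val ∘ I.equivFin.symm) (Fin.natAdd P ∘ Fin.castLE hI)
        (Subtype.val_injective.comp I.equivFin.symm.injective)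
        ((Fin.natAdd_injective Q P).comp (Fin.castLE_injective hI)))
  have hNmeas : Measurable N.mulVec := measurable_of_countable _
  have hunif : μ.map (fun ω => N.mulVec (Y ω)) =
      (PMF.uniformOfFintype (I → 𝔽)).toMeasure := by
    have hmap : (PMF.uniformOfFintype (Fin Q → 𝔽)).map N.mulVec =
        PMF.uniformOfFintype (I → 𝔽) :=
      PMF.map_uniformOfFintype_of_surjective N.mulVecLin.toAddMonoidHom hN
    rw [← hmap, ← PMF.toMeasure_map _ _ hNmeas, ← hYunif, Measure.map_map hNmeas hYmeas]
    rfl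
  have hS' : (fun ω (i : I) => S i ω) =
      fun ω => C.submatrix (Subtype.val : I → _) (Fin.castAdd Q) *ᵥ W ω + N *ᵥ Y ω := by
    ext ω i
    exact hS i ω
  rw [hS']
  exact map_eq_uniform_and_indepFun_of_add hWmeas (hNmeas.comp hYmeas) hunif
    (hindep.comp measurable_id hNmeas) _
end

section
/- Let (Ω, μ) be a probability space, α, β, γ finite nonempty types, W : Ω → α, A : Ω → β, B : Ω → γ measurable random variables. Suppose W is uniformly distributed on α, W and A are independent, and there is a function g : β × γ → α with W = g(A, B) almost surely. Then card α ≤ card γ. -/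
open MeasureTheory ProbabilityTheory

/-- **Cut-set counting lemma.** A uniformly distributed random variable `W` that is
independent of `A` yet recoverable almost surely as a function of `(A, B)` cannot take
more values than `B` does. -/
theorem card_le_of_uniform_indep_recoverable
    {Ω : Type*} [MeasurableSpace Ω] (μ : Measure Ω) [IsProbabilityMeasure μ]
    {α β γ : Type*} [Fintype α] [Nonempty α] [Fintype β] [Nonempty β]
    [Fintype γ] [Nonempty γ]
    [MeasurableSpace α] [MeasurableSingletonClass α]
    [MeasurableSpace β] [MeasurableSingletonClass β]
    [MeasurableSpace γ] [MeasurableSingletonClass γ]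
    (W : Ω → α) (A : Ω → β) (B : Ω → γ)
    (hW : Measurable W) (hA : Measurable A) (hB : Measurable B)
    (hWunif : Measure.map W μ = (PMF.uniformOfFintype α).toMeasure)
    (hindep : IndepFun W A μ)
    (g : β × γ → α) (hg : W =ᵐ[μ] fun ω => g (A ω, B ω)) :
    Fintype.card α ≤ Fintype.card γ := by
  obtain ⟨a, ha⟩ : ∃ a, μ (A ⁻¹' {a}) ≠ 0 := by
    by_contra! h
    have hne : ∀ᵐ ω ∂μ, ∀ a, A ω ≠ a := ae_all_iff.2 fun a => by
      rw [ae_iff]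
      simpa [Set.preimage] using h a
    obtain ⟨ω, hω⟩ := hne.exists
    exact hω _ rfl
  refine Fintype.card_le_of_surjective (fun c => g (a, c)) fun w => ?_
  have hw : μ (W ⁻¹' {w}) ≠ 0 := by
    rw [← Measure.map_apply hW (measurableSet_singleton w), hWunif,
      PMF.toMeasure_apply_singleton _ _ (measurableSet_singleton w)]
    simp
  have hpos : μ (W ⁻¹' {w} ∩ A ⁻¹' {a}) ≠ 0 := by
    rw [hindep.measure_inter_preimage_eq_mul _ _ (measurableSet_singleton w)
      (measurableSet_singleton a)]
    exact mul_ne_zero hw ha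
  obtain ⟨ω, ⟨hωw, hωa⟩, hω⟩ :=
    ((frequently_ae_mem_iff.2 hpos).and_eventually hg).exists
  rw [Set.mem_preimage, Set.mem_singleton_iff] at hωw hωa
  exact ⟨B ω, by simp only [← hωw, hω, ← hωa]⟩
end

section
/- Let K, l, t be natural numbers with 1 ≤ l, t + l + 1 ≤ K, and l·(t+2) ≤ K + 1. Then C(K, t+2) · C(K−l, t) ≤ C(K, t+1) · C(K−l, t+1). In particular, the communication load R^C(t) = C(K,t+1)/C(K−l,t) of the proposed scheme is non-increasing in t on the range t ∈ {0, 1, …, max(⌈(K+1)/l⌉ − 2, 0)}. -/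
/-- **Monotonicity of the achievable load `R^C(t) = C(K,t+1)/C(K−l,t)`.**
If `1 ≤ l`, `t + l + 1 ≤ K` and `l(t+2) ≤ K+1`, then
`C(K,t+2)·C(K−l,t) ≤ C(K,t+1)·C(K−l,t+1)`; equivalently `R^C(t+1) ≤ R^C(t)`,
so `R^C` is non-increasing on the range `t ∈ {0,…,max(⌈(K+1)/l⌉−2,0)}`. -/
theorem rate_choose_ratio_antitone
    (K l t : ℕ) (hl : 1 ≤ l) (htlK : t + l + 1 ≤ K) (hlt : l * (t + 2) ≤ K + 1) :
    Nat.choose K (t + 2) * Nat.choose (K - l) t ≤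
      Nat.choose K (t + 1) * Nat.choose (K - l) (t + 1) ∧
    (Nat.choose K (t + 2) : ℚ) / Nat.choose (K - l) (t + 1) ≤
      (Nat.choose K (t + 1) : ℚ) / Nat.choose (K - l) t := by
  obtain ⟨m, rfl⟩ := Nat.exists_eq_add_of_le htlK
  have hsub : t + l + 1 + m - l = t + 1 + m := by omega
  rw [hsub]
  have hK := Nat.choose_succ_right_eq (t + l + 1 + m) (t + 1)
  have hKl := Nat.choose_succ_right_eq (t + 1 + m) t
  rw [show t + l + 1 + m - (t + 1) = l + m by omega] at hK
  rw [show t + 1 + m - t = m + 1 by omega] at hKl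
  have hfactor : (l + m) * (t + 1) ≤ (m + 1) * (t + 2) := by nlinarith
  have hmul : Nat.choose (t + l + 1 + m) (t + 2) * Nat.choose (t + 1 + m) t ≤
      Nat.choose (t + l + 1 + m) (t + 1) * Nat.choose (t + 1 + m) (t + 1) := by
    refine Nat.le_of_mul_le_mul_right (c := (t + 2) * (t + 1)) ?_ (by positivity)
    calc
      _ = (Nat.choose (t + l + 1 + m) (t + 1 + 1) * (t + 1 + 1)) *
          Nat.choose (t + 1 + m) t * (t + 1) := by ring
      _ = Nat.choose (t + l + 1 + m) (t + 1) * Nat.choose (t + 1 + m) t *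
          ((l + m) * (t + 1)) := by rw [hK]; ring
      _ ≤ Nat.choose (t + l + 1 + m) (t + 1) * Nat.choose (t + 1 + m) t *
          ((m + 1) * (t + 2)) := Nat.mul_le_mul_left _ hfactor
      _ = Nat.choose (t + l + 1 + m) (t + 1) *
          (Nat.choose (t + 1 + m) t * (m + 1)) * (t + 2) := by ring
      _ = _ := by rw [← hKl]; ring
  refine ⟨hmul, ?_⟩
  have hpos : 0 < Nat.choose (t + 1 + m) t := Nat.choose_pos (by omega)
  have hpos_succ : 0 < Nat.choose (t + 1 + m) (t + 1) := Nat.choose_pos (by omega)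
  rw [div_le_div_iff₀ (by exact_mod_cast hpos_succ) (by exact_mod_cast hpos)]
  exact_mod_cast hmul
end

section
/- Let K, l, t be natural numbers with 1 ≤ l and l + t ≤ K. Then, as real numbers, (∏_{j=0}^{t−1} (K−j)/(K−l−j))² ≤ (K·(K−t+1) / ((K−l)·(K−l−t+1)))^t. -/
/-- Replacing a pair of shifts `x, y` by `0, x + y` increases the product of the two ratios
`(a - x) / (b - x)` and `(a - y) / (b - y)`. -/
theorem sub_div_sub_mul_le_of_le {a b x y : ℝ} (hx : 0 ≤ x) (hy : 0 ≤ y) (hba : b ≤ a)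
    (hb : x + y < b) :
    (a - x) / (b - x) * ((a - y) / (b - y)) ≤ a * (a - (x + y)) / (b * (b - (x + y))) := by
  have hbx : 0 < b - x := by linarith
  have hby : 0 < b - y := by linarith
  have hb₀ : 0 < b := by linarith
  have hbxy : 0 < b - (x + y) := by linarith
  have hmul : b * (b - (x + y)) ≤ a * (a - (x + y)) := by gcongr; linarith
  rw [div_mul_div_comm, div_le_div_iff₀ (by positivity) (by positivity)]
  nlinarith [mul_le_mul_of_nonneg_left hmul (mul_nonneg hx hy)]

/-- **Pairing bound used in the proof of Corollary 1:**
`(∏_{j=0}^{t−1} (K−j)/(K−l−j))² ≤ (K(K−t+1)/((K−l)(K−l−t+1)))^t`. -/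
theorem prod_ratio_sq_le_pow
    (K l t : ℕ) (hl : 1 ≤ l) (hlt : l + t ≤ K) :
    (∏ j ∈ Finset.range t, ((K : ℝ) - j) / ((K : ℝ) - l - j)) ^ 2 ≤
      ((K : ℝ) * ((K : ℝ) - t + 1) / (((K : ℝ) - l) * ((K : ℝ) - l - t + 1))) ^ t := by
  have hK : (l : ℝ) + t ≤ K := by exact_mod_cast hlt
  have hl₀ : (0 : ℝ) ≤ l := l.cast_nonneg
  rw [sq]
  nth_rewrite 2 [← Finset.prod_range_reflect]
  rw [← Finset.prod_mul_distrib]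
  refine (Finset.prod_le_prod (fun j hj => ?_) (fun j hj => ?_)).trans_eq
    ((Finset.prod_const _).trans (by rw [Finset.card_range]))
  all_goals
    have hjt := Finset.mem_range.mp hj
    have hsum : (j : ℝ) + (t - 1 - j : ℕ) = t - 1 := by
      rw [eq_sub_iff_add_eq]
      exact_mod_cast (by omega : j + (t - 1 - j) + 1 = t)
    have hj₀ : (0 : ℝ) ≤ j := j.cast_nonneg
    have hr₀ : (0 : ℝ) ≤ (t - 1 - j : ℕ) := Nat.cast_nonneg _
  · exact mul_nonneg (div_nonneg (by linarith) (by linarith))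
      (div_nonneg (by linarith) (by linarith))
  · refine (sub_div_sub_mul_le_of_le hj₀ hr₀ (by linarith) (by linarith)).trans_eq ?_
    rw [hsum, sub_sub_eq_add_sub, sub_sub_eq_add_sub, add_sub_right_comm, add_sub_right_comm]
end

section
/- Let K, l be natural numbers with 1 ≤ l and 12·l ≤ K + 1, and set t = ⌊(K+1)/(10l)⌋. Then, as rational numbers, C(K, t+1) / C(K−l, t) ≤ 12·l. -/
/-- Removing `l` points from the ground set loses at most `l * C(n+l-1, s)` of the
`(s+1)`-subsets. -/
theorem choose_add_succ_le (n l s : ℕ) :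
    (n + l).choose (s + 1) ≤ n.choose (s + 1) + l * (n + l - 1).choose s := by
  induction l with
  | zero => simp
  | succ l ih =>
    have hmono : (n + l - 1).choose s ≤ (n + l).choose s := Nat.choose_le_choose s (by omega)
    have hmul := Nat.mul_le_mul_left l hmono
    have hsucc : (n + (l + 1)).choose (s + 1) = (n + l).choose s + (n + l).choose (s + 1) :=
      Nat.choose_succ_succ (n + l) s
    rw [hsucc, show n + (l + 1) - 1 = n + l by omega, Nat.add_mul]
    omega

/-- If `9 * l * t ≤ K`, then removing `l` points loses at most a ninth of the `t`-subsets. -/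
theorem eight_mul_choose_le {K l t : ℕ} (hl : 1 ≤ l) (ht : 1 ≤ t) (h : 9 * (l * t) ≤ K) :
    8 * K.choose t ≤ 9 * (K - l).choose t := by
  obtain ⟨s, rfl⟩ : ∃ s, t = s + 1 := ⟨t - 1, by omega⟩
  have hlt : l ≤ l * (s + 1) := Nat.le_mul_of_pos_right l (by omega)
  obtain ⟨m, rfl⟩ : ∃ m, K = m + 1 := ⟨K - 1, by omega⟩
  have hdiff := choose_add_succ_le (m + 1 - l) l s
  rw [Nat.sub_add_cancel (by omega), Nat.add_sub_cancel] at hdiff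
  have habs := Nat.add_one_mul_choose_eq m s
  have hloss : 9 * (l * m.choose s) ≤ (m + 1).choose (s + 1) := by
    refine Nat.le_of_mul_le_mul_left ?_ (Nat.succ_pos m)
    calc (m + 1) * (9 * (l * m.choose s))
        = 9 * l * ((m + 1) * m.choose s) := by ring
      _ = 9 * (l * (s + 1)) * (m + 1).choose (s + 1) := by rw [habs]; ring
      _ ≤ (m + 1) * (m + 1).choose (s + 1) := Nat.mul_le_mul_right _ h
  omega

/-- **Key step of region 3 in the proof of Corollary 1.** With `t = ⌊(K+1)/(10l)⌋` and
`12l ≤ K+1`, the achievable communication load satisfies `C(K,t+1)/C(K−l,t) ≤ 12l`. -/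
theorem rate_at_floor_le_twelve_l
    (K l : ℕ) (hl : 1 ≤ l) (hlK : 12 * l ≤ K + 1) :
    (Nat.choose K ((K + 1) / (10 * l) + 1) : ℚ) /
        Nat.choose (K - l) ((K + 1) / (10 * l)) ≤ 12 * l := by
  have hpos : 0 < 10 * l := by omega
  have ht : 1 ≤ (K + 1) / (10 * l) := (Nat.one_le_div_iff hpos).2 (by omega)
  have hlow : 10 * l * ((K + 1) / (10 * l)) ≤ K + 1 := Nat.mul_div_le _ _
  have hupp : K + 1 < 10 * l * ((K + 1) / (10 * l) + 1) := Nat.lt_mul_div_succ _ hpos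
  generalize (K + 1) / (10 * l) = t at *
  have hlt : 1 ≤ l * t := Nat.mul_pos hl ht
  have hratio := eight_mul_choose_le (K := K) hl ht (by rw [mul_assoc] at hlow; omega)
  have hnext : K.choose (t + 1) ≤ 10 * l * K.choose t := by
    refine Nat.le_of_mul_le_mul_right ?_ (Nat.succ_pos t)
    calc K.choose (t + 1) * (t + 1) = K.choose t * (K - t) := Nat.choose_succ_right_eq K t
      _ ≤ K.choose t * (10 * l * (t + 1)) := Nat.mul_le_mul_left _ (by omega)
      _ = 10 * l * K.choose t * (t + 1) := by ring
  have hbound : K.choose (t + 1) ≤ 12 * l * (K - l).choose t := by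
    have := Nat.mul_le_mul_left l hratio
    nlinarith
  exact div_le_of_le_mul₀ (by positivity) (by positivity) (by exact_mod_cast hbound)
end
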